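/- Fix a natural number p ≥ 4, real numbers β₁, β₂, β₃ and complex numbers α₁, …, α₆ with |α₄| ≥ |α₅|. Then there exist constants α, β ∈ [0, ∞) such that for every n ∈ ℤ₊ and every x ∈ h_n: 2 Re⟨N^p x, N^p P_n G x⟩ + Σ_{k=1}^{6} ‖N^p P_n L_k x‖² ≤ α (‖N^p x‖² + ‖x‖²) + β. -/

import Mathlib

noncomputable section

namespace QOsc

/-- The annihilation operator `a` in coordinates: `a e_j = √j e_{j-1}`. -/
def ann (f : ℕ → ℂ) : ℕ → ℂ := fun j => (Real.sqrt (j + 1) : ℂ) * f (j + 1)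

/-- The creation operator `a†` in coordinates: `a† e_j = √(j+1) e_{j+1}`. -/
def cre (f : ℕ → ℂ) : ℕ → ℂ := fun j => if j = 0 then 0 else (Real.sqrt j : ℂ) * f (j - 1)

/-- The number operator `N = a† a`. -/
def num (f : ℕ → ℂ) : ℕ → ℂ := fun j => (j : ℂ) * f j

/-- The power `N^p` of the number operator. -/
def numPow (p : ℕ) (f : ℕ → ℂ) : ℕ → ℂ := fun j => (j : ℂ) ^ p * f j

/-- The orthogonal projection `P_n` onto the span `h_n` of `e_0, …, e_n`. -/
def proj (n : ℕ) (f : ℕ → ℂ) : ℕ → ℂ := fun j => if j ≤ n then f j else 0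

/-- The inner product `⟨f, g⟩ = Σ_j conj (f_j) g_j` (linear in the second variable). -/
def innerSeq (f g : ℕ → ℂ) : ℂ := ∑' j : ℕ, (starRingEnd ℂ) (f j) * g j

/-- The squared norm `‖f‖² = Σ_j |f_j|²`. -/
def normSq (f : ℕ → ℂ) : ℝ := ∑' j : ℕ, ‖f j‖ ^ 2

/-- The Hamiltonian `H = iβ₁(a† − a) + β₂ N + β₃ (a†)² a²`. -/
def Ham (b1 b2 b3 : ℝ) (f : ℕ → ℂ) : ℕ → ℂ :=
  (Complex.I * (b1 : ℂ)) • (cre f - ann f) + (b2 : ℂ) • num f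
    + (b3 : ℂ) • cre (cre (ann (ann f)))

/-- The effective Hamiltonian
`G = −iH − ½(|α₁|² a† a + |α₂|² a a† + |α₃|² N² + |α₄|² (a†)² a² + |α₅|² a² (a†)² + |α₆|² N⁴)`. -/
def Gop (b1 b2 b3 : ℝ) (a1 a2 a3 a4 a5 a6 : ℂ) (f : ℕ → ℂ) : ℕ → ℂ :=
  (-Complex.I) • Ham b1 b2 b3 f
    - (1 / 2 : ℂ) •
      (((‖a1‖ ^ 2 : ℝ) : ℂ) • cre (ann f) + ((‖a2‖ ^ 2 : ℝ) : ℂ) • ann (cre f)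
        + ((‖a3‖ ^ 2 : ℝ) : ℂ) • num (num f)
        + ((‖a4‖ ^ 2 : ℝ) : ℂ) • cre (cre (ann (ann f)))
        + ((‖a5‖ ^ 2 : ℝ) : ℂ) • ann (ann (cre (cre f)))
        + ((‖a6‖ ^ 2 : ℝ) : ℂ) • num (num (num (num f))))

lemma sq_sqrt_c (t : ℝ) (ht : 0 ≤ t) : (Real.sqrt t : ℂ) * (Real.sqrt t : ℂ) = (t : ℂ) := by
  rw [← Complex.ofReal_mul, Real.mul_self_sqrt ht]

lemma cre_ann (x : ℕ → ℂ) (j : ℕ) : cre (ann x) j = ((j : ℝ) : ℂ) * x j := by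
  cases j with
  | zero => simp [cre]
  | succ k =>
    have h := sq_sqrt_c ((k : ℝ) + 1) (by positivity)
    simp only [cre, ann, Nat.succ_ne_zero, if_false, Nat.add_sub_cancel, Nat.cast_add, Nat.cast_one]
    rw [← mul_assoc, h]

lemma ann_cre (x : ℕ → ℂ) (j : ℕ) : ann (cre x) j = (((j : ℝ) + 1 : ℝ) : ℂ) * x j := by
  have h := sq_sqrt_c ((j : ℝ) + 1) (by positivity)
  simp only [cre, ann, Nat.succ_ne_zero, if_false, Nat.add_sub_cancel, Nat.cast_add, Nat.cast_one]
  rw [← mul_assoc, h]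

lemma ccaa (x : ℕ → ℂ) (j : ℕ) :
    cre (cre (ann (ann x))) j = (((j : ℝ) * ((j : ℝ) - 1) : ℝ) : ℂ) * x j := by
  have e : cre (ann (ann x)) = fun j : ℕ => ((j : ℝ) : ℂ) * ann x j := funext (cre_ann (ann x))
  rw [e]
  cases j with
  | zero => simp [cre]
  | succ k =>
    have h := sq_sqrt_c ((k : ℝ) + 1) (by positivity)
    simp only [cre, ann, Nat.succ_ne_zero, if_false, Nat.add_sub_cancel, Nat.cast_add, Nat.cast_one]
    push_cast at h ⊢
    linear_combination (k : ℂ) * x (k + 1) * h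

lemma aacc (x : ℕ → ℂ) (j : ℕ) :
    ann (ann (cre (cre x))) j = ((((j : ℝ) + 1) * ((j : ℝ) + 2) : ℝ) : ℂ) * x j := by
  have e : ann (cre (cre x)) = fun j : ℕ => (((j : ℝ) + 1 : ℝ) : ℂ) * cre x j :=
    funext (ann_cre (cre x))
  rw [e]
  have h := sq_sqrt_c ((j : ℝ) + 1) (by positivity)
  simp only [cre, ann, Nat.succ_ne_zero, if_false, Nat.add_sub_cancel, Nat.cast_add, Nat.cast_one]
  push_cast at h ⊢
  linear_combination ((j : ℂ) + 2) * x j * h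

/-- shift of a finite sum -/
lemma sum_shift (n : ℕ) (f : ℕ → ℝ) (h0 : f 0 = 0) (hn : f (n + 1) = 0) :
    ∑ j ∈ Finset.range (n + 1), f (j + 1) = ∑ j ∈ Finset.range (n + 1), f j := by
  have h1 := Finset.sum_range_succ' f (n + 1)
  have h2 := Finset.sum_range_succ f (n + 1)
  rw [h0] at h1
  rw [hn] at h2
  linarith

lemma normSq_proj (p n : ℕ) (f : ℕ → ℂ) :
    normSq (numPow p (proj n f)) = ∑ j ∈ Finset.range (n + 1), (j : ℝ) ^ (2 * p) * ‖f j‖ ^ 2 := by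
  unfold normSq
  rw [tsum_eq_sum (s := Finset.range (n + 1))]
  · refine Finset.sum_congr rfl fun j hj => ?_
    have : j ≤ n := Nat.lt_succ_iff.mp (Finset.mem_range.mp hj)
    simp [numPow, proj, this, mul_pow, pow_mul']
  · intro j hj
    have : ¬ j ≤ n := fun h => hj (Finset.mem_range.mpr (Nat.lt_succ_of_le h))
    simp [numPow, proj, this]

lemma proj_self (n : ℕ) (x : ℕ → ℂ) (hx : ∀ j, n < j → x j = 0) : proj n x = x := by
  funext j
  by_cases h : j ≤ n
  · simp [proj, h]
  · simp [proj, h, hx j (not_le.mp h)]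

lemma inner_proj (p n : ℕ) (x g : ℕ → ℂ) :
    (innerSeq (numPow p x) (numPow p (proj n g))).re
      = ∑ j ∈ Finset.range (n + 1), (j : ℝ) ^ (2 * p) * ((starRingEnd ℂ) (x j) * g j).re := by
  unfold innerSeq
  rw [tsum_eq_sum (s := Finset.range (n + 1))]
  · rw [Complex.re_sum]
    refine Finset.sum_congr rfl fun j hj => ?_
    have : j ≤ n := Nat.lt_succ_iff.mp (Finset.mem_range.mp hj)
    rw [← Complex.re_ofReal_mul]
    congr 1
    simp only [numPow, proj, this, if_true, map_mul, map_pow, Complex.conj_natCast]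
    push_cast
    ring
  · intro j hj
    have : ¬ j ≤ n := fun h => hj (Finset.mem_range.mpr (Nat.lt_succ_of_le h))
    simp [numPow, proj, this]

/-- pointwise form of `Re (conj x_j (G x)_j)` -/
lemma G_point (b1 b2 b3 : ℝ) (a1 a2 a3 a4 a5 a6 : ℂ) (x : ℕ → ℂ) (j : ℕ) :
    ((starRingEnd ℂ) (x j) * Gop b1 b2 b3 a1 a2 a3 a4 a5 a6 x j).re
      = b1 * (((starRingEnd ℂ) (x j) * cre x j).re - ((starRingEnd ℂ) (x j) * ann x j).re)
        - 1 / 2 * (‖a1‖ ^ 2 * j + ‖a2‖ ^ 2 * (j + 1) + ‖a3‖ ^ 2 * j ^ 2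
          + ‖a4‖ ^ 2 * (j * (j - 1)) + ‖a5‖ ^ 2 * ((j + 1) * (j + 2)) + ‖a6‖ ^ 2 * j ^ 4)
          * ‖x j‖ ^ 2 := by
  have hw : (starRingEnd ℂ) (x j) * x j = ((‖x j‖ ^ 2 : ℝ) : ℂ) := by
    rw [Complex.conj_mul']; push_cast; rfl
  set K : ℝ := ‖a1‖ ^ 2 * j + ‖a2‖ ^ 2 * (j + 1) + ‖a3‖ ^ 2 * j ^ 2
          + ‖a4‖ ^ 2 * (j * (j - 1)) + ‖a5‖ ^ 2 * ((j + 1) * (j + 2)) + ‖a6‖ ^ 2 * j ^ 4 with hK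
  have e : (starRingEnd ℂ) (x j) * Gop b1 b2 b3 a1 a2 a3 a4 a5 a6 x j
      = (b1 : ℂ) * ((starRingEnd ℂ) (x j) * cre x j - (starRingEnd ℂ) (x j) * ann x j)
        - ((1 / 2 * K * ‖x j‖ ^ 2 : ℝ) : ℂ)
        - Complex.I * (((b2 * j + b3 * (j * (j - 1))) * ‖x j‖ ^ 2 : ℝ) : ℂ) := by
    have g : Gop b1 b2 b3 a1 a2 a3 a4 a5 a6 x j
      = (b1 : ℂ) * (cre x j - ann x j) - ((1 / 2 * K : ℝ) : ℂ) * x j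
        - Complex.I * ((b2 * j + b3 * (j * (j - 1)) : ℝ) : ℂ) * x j := by
      simp only [Gop, Ham, Pi.add_apply, Pi.sub_apply, Pi.smul_apply, smul_eq_mul, cre_ann, ann_cre,
        ccaa, aacc, num, hK]
      push_cast
      linear_combination (-(b1 : ℂ) * (cre x j - ann x j)) * Complex.I_sq
    rw [g]
    push_cast at hw ⊢
    linear_combination (-(1 / 2 * (K : ℂ)) - Complex.I * (b2 * j + b3 * (j * (j - 1)))) * hw
  rw [e]
  simp only [Complex.sub_re, Complex.re_ofReal_mul, Complex.ofReal_re, Complex.I_mul_re,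
    Complex.ofReal_im]
  ring

lemma diff_bound (s t d : ℝ) (ht : |t| ≤ s) (hd : s - t = d) (m : ℕ) :
    s * (s ^ m - t ^ m) ≤ d * m * s ^ m := by
  have hs : 0 ≤ s := (abs_nonneg t).trans ht
  have hts := le_of_abs_le ht
  induction m with
  | zero => simp
  | succ m ih =>
    have h1 : t ^ m ≤ s ^ m := by
      calc t ^ m ≤ |t ^ m| := le_abs_self _
        _ = |t| ^ m := abs_pow t m
        _ ≤ s ^ m := pow_le_pow_left₀ (abs_nonneg t) ht m
    have h2 := mul_le_mul_of_nonneg_left ih hs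
    have h3 := mul_le_mul_of_nonneg_left h1 (mul_nonneg hs (by linarith : 0 ≤ d))
    push_cast
    have : s * (s ^ (m + 1) - t ^ (m + 1)) = s * (s * (s ^ m - t ^ m)) + s * d * t ^ m := by
      rw [← hd]; ring
    rw [this]
    have e : d * ((m : ℝ) + 1) * s ^ (m + 1) = s * (d * m * s ^ m) + s * d * s ^ m := by ring
    rw [e]; linarith

lemma second_diff (k : ℝ) (hk : 0 ≤ k) (m : ℕ) :
    (k + 2) ^ 2 * ((k + 2) ^ m + (k - 2) ^ m - 2 * k ^ m) ≤ 4 * m ^ 2 * (k + 2) ^ m := by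
  induction m with
  | zero => norm_num
  | succ m ih =>
    have hE := diff_bound (k + 2) (k - 2) 4 (by rw [abs_le]; constructor <;> linarith) (by ring) m
    have hp : 0 ≤ (k + 2) ^ m := by positivity
    have h1 := mul_le_mul_of_nonneg_left ih hk
    have h2 := mul_le_mul_of_nonneg_left hE (by linarith : 0 ≤ 2 * (k + 2))
    have e : (k + 2) ^ 2 * ((k + 2) ^ (m + 1) + (k - 2) ^ (m + 1) - 2 * k ^ (m + 1))
      = k * ((k + 2) ^ 2 * ((k + 2) ^ m + (k - 2) ^ m - 2 * k ^ m))
        + 2 * (k + 2) * ((k + 2) * ((k + 2) ^ m - (k - 2) ^ m)) := by ring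
    rw [e]
    push_cast
    have e2 : 4 * ((m : ℝ) + 1) ^ 2 * (k + 2) ^ (m + 1)
      = k * (4 * m ^ 2 * (k + 2) ^ m) + 2 * (k + 2) * (4 * m * (k + 2) ^ m)
        + (8 * m ^ 2 + 4 * (k + 2)) * (k + 2) ^ m := by ring
    rw [e2]
    have : 0 ≤ (8 * (m : ℝ) ^ 2 + 4 * (k + 2)) * (k + 2) ^ m := by positivity
    linarith

/-- the two-photon estimate -/
lemma two_photon (k m : ℕ) :
    (k : ℝ) * (k - 1) * (((k : ℝ) - 2) ^ m - (k : ℝ) ^ m)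
      + ((k : ℝ) + 1) * (k + 2) * (((k : ℝ) + 2) ^ m - (k : ℝ) ^ m)
      ≤ (4 * m ^ 2 + 8 * m) * ((k : ℝ) + 2) ^ m := by
  have hk : (0 : ℝ) ≤ k := Nat.cast_nonneg k
  have hkk : (0 : ℝ) ≤ (k : ℝ) * (k - 1) := by
    rcases Nat.eq_zero_or_pos k with h | h
    · simp [h]
    · have : (1 : ℝ) ≤ k := by exact_mod_cast h
      exact mul_nonneg hk (by linarith)
  have hD := second_diff k hk m
  have hF := diff_bound ((k : ℝ) + 2) k 2 (by rw [abs_of_nonneg hk]; linarith) (by ring) m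
  have hmono : (k : ℝ) ^ m ≤ ((k : ℝ) + 2) ^ m := pow_le_pow_left₀ hk (by linarith) m
  set D := ((k : ℝ) + 2) ^ m + ((k : ℝ) - 2) ^ m - 2 * (k : ℝ) ^ m with hDdef
  have h1 : (k : ℝ) * (k - 1) * D ≤ 4 * m ^ 2 * ((k : ℝ) + 2) ^ m := by
    rcases le_total D 0 with h | h
    · have := mul_nonpos_of_nonneg_of_nonpos hkk h
      have : 0 ≤ 4 * (m : ℝ) ^ 2 * ((k : ℝ) + 2) ^ m := by positivity
      linarith
    · refine le_trans (mul_le_mul_of_nonneg_right ?_ h) hD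
      nlinarith
  have h2 : (4 * (k : ℝ) + 2) * (((k : ℝ) + 2) ^ m - (k : ℝ) ^ m)
      ≤ 4 * (((k : ℝ) + 2) * (((k : ℝ) + 2) ^ m - (k : ℝ) ^ m)) := by
    have := sub_nonneg.mpr hmono
    nlinarith
  have e : (k : ℝ) * (k - 1) * (((k : ℝ) - 2) ^ m - (k : ℝ) ^ m)
      + ((k : ℝ) + 1) * (k + 2) * (((k : ℝ) + 2) ^ m - (k : ℝ) ^ m)
      = (k : ℝ) * (k - 1) * D + (4 * (k : ℝ) + 2) * (((k : ℝ) + 2) ^ m - (k : ℝ) ^ m) := by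
    rw [hDdef]; ring
  rw [e]
  linarith

lemma pow_shift_bound (k m : ℕ) : ((k : ℝ) + 2) ^ m ≤ 3 ^ m * ((k : ℝ) ^ m + 1) := by
  have h3 : (0 : ℝ) ≤ 3 ^ m := by positivity
  rcases Nat.eq_zero_or_pos k with h | h
  · subst h
    have : (2 : ℝ) ^ m ≤ 3 ^ m := pow_le_pow_left₀ (by norm_num) (by norm_num) m
    have h0 : (0 : ℝ) ≤ (0 : ℝ) ^ m := by positivity
    push_cast
    rw [zero_add]
    nlinarith
  · have h1 : (1 : ℝ) ≤ k := by exact_mod_cast h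
    have : ((k : ℝ) + 2) ^ m ≤ (3 * k) ^ m := pow_le_pow_left₀ (by linarith) (by linarith) m
    rw [mul_pow] at this
    nlinarith

lemma ann_norm (x : ℕ → ℂ) (j : ℕ) : ‖ann x j‖ ^ 2 = ((j : ℝ) + 1) * ‖x (j + 1)‖ ^ 2 := by
  simp only [ann]
  rw [norm_mul, mul_pow, Complex.norm_real, Real.norm_eq_abs, sq_abs, Real.sq_sqrt (by positivity)]

lemma cre_norm (x : ℕ → ℂ) (j : ℕ) : ‖cre x (j + 1)‖ ^ 2 = ((j : ℝ) + 1) * ‖x j‖ ^ 2 := by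
  simp only [cre, Nat.succ_ne_zero, if_false, Nat.add_sub_cancel]
  rw [norm_mul, mul_pow, Complex.norm_real, Real.norm_eq_abs, sq_abs, Real.sq_sqrt (by positivity)]
  push_cast; rfl

lemma L1_bound (m n : ℕ) (x : ℕ → ℂ) (hx : ∀ j, n < j → x j = 0) :
    ∑ j ∈ Finset.range (n + 1), (j : ℝ) ^ m * ‖ann x j‖ ^ 2
      ≤ ∑ j ∈ Finset.range (n + 1), (j : ℝ) ^ m * j * ‖x j‖ ^ 2 := by
  rw [← sum_shift n (fun j => (j : ℝ) ^ m * j * ‖x j‖ ^ 2) (by simp)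
    (by simp [hx (n + 1) (Nat.lt_succ_self n)])]
  refine Finset.sum_le_sum fun j _ => ?_
  rw [ann_norm]
  push_cast
  rw [mul_assoc]
  have : (j : ℝ) ^ m ≤ ((j : ℝ) + 1) ^ m := pow_le_pow_left₀ (by positivity) (by linarith) m
  exact mul_le_mul_of_nonneg_right this (by positivity)

lemma L4_eq (m n : ℕ) (x : ℕ → ℂ) (hx : ∀ j, n < j → x j = 0) :
    ∑ j ∈ Finset.range (n + 1), (j : ℝ) ^ m * ‖ann (ann x) j‖ ^ 2
      = ∑ j ∈ Finset.range (n + 1), ((j : ℝ) - 2) ^ m * (j * (j - 1)) * ‖x j‖ ^ 2 := by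
  rw [← sum_shift n (fun j => ((j : ℝ) - 2) ^ m * (j * (j - 1)) * ‖x j‖ ^ 2) (by simp)
    (by simp [hx (n + 1) (Nat.lt_succ_self n)])]
  rw [← sum_shift n (fun j => (((j + 1 : ℕ) : ℝ) - 2) ^ m * (((j + 1 : ℕ) : ℝ)
    * (((j + 1 : ℕ) : ℝ) - 1)) * ‖x (j + 1)‖ ^ 2) (by simp)
    (by simp [hx (n + 1 + 1) (by omega)])]
  refine Finset.sum_congr rfl fun j _ => ?_
  rw [ann_norm, ann_norm]
  push_cast
  ring

lemma up_le (n : ℕ) (f g : ℕ → ℝ) (h0 : f 0 = 0) (hfg : ∀ j, f (j + 1) ≤ g j)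
    (hg : ∀ j, 0 ≤ g j) :
    ∑ j ∈ Finset.range (n + 1), f j ≤ ∑ j ∈ Finset.range (n + 1), g j := by
  rw [Finset.sum_range_succ', h0, add_zero, Finset.sum_range_succ]
  have := Finset.sum_le_sum (s := Finset.range n) fun j _ => hfg j
  have := hg n
  linarith

lemma L2_bound (m n : ℕ) (x : ℕ → ℂ) :
    ∑ j ∈ Finset.range (n + 1), (j : ℝ) ^ m * ‖cre x j‖ ^ 2
      ≤ ∑ j ∈ Finset.range (n + 1), ((j : ℝ) + 1) ^ m * (j + 1) * ‖x j‖ ^ 2 := by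
  refine up_le n _ _ (by simp [cre]) (fun j => ?_) (fun j => by positivity)
  rw [cre_norm]
  push_cast
  rw [mul_assoc]

lemma L5_bound (m n : ℕ) (x : ℕ → ℂ) :
    ∑ j ∈ Finset.range (n + 1), (j : ℝ) ^ m * ‖cre (cre x) j‖ ^ 2
      ≤ ∑ j ∈ Finset.range (n + 1), ((j : ℝ) + 2) ^ m * ((j + 1) * (j + 2)) * ‖x j‖ ^ 2 := by
  refine le_trans (up_le n _ (fun j => ((j : ℝ) + 1) ^ m * (j + 1) * ‖cre x j‖ ^ 2)
    (by simp [cre]) (fun j => ?_) (fun j => by positivity)) ?_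
  · rw [cre_norm]
    push_cast
    rw [mul_assoc]
  · refine up_le n _ _ (by simp [cre]) (fun j => ?_) (fun j => by positivity)
    rw [cre_norm]
    push_cast
    apply le_of_eq
    ring

lemma cross_point (m : ℕ) (b s : ℝ) (hs : 1 ≤ s) (u v : ℂ) :
    2 * b * ((s ^ m - (s - 1) ^ m) * (Real.sqrt s * ((starRingEnd ℂ) v * u).re))
      ≤ |b| * m * s ^ m * (‖u‖ ^ 2 + ‖v‖ ^ 2) := by
  have hd := diff_bound s (s - 1) 1 (by rw [abs_of_nonneg] <;> linarith) (by ring) m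
  have hnn : 0 ≤ s ^ m - (s - 1) ^ m :=
    sub_nonneg.mpr (pow_le_pow_left₀ (by linarith) (by linarith) m)
  have hsq : Real.sqrt s ≤ s := by
    rw [Real.sqrt_le_left (by linarith)]; nlinarith
  have hre : |((starRingEnd ℂ) v * u).re| ≤ ‖v‖ * ‖u‖ := by
    have := Complex.abs_re_le_norm ((starRingEnd ℂ) v * u)
    rwa [norm_mul, Complex.norm_conj] at this
  have hre2 : 2 * |((starRingEnd ℂ) v * u).re| ≤ ‖u‖ ^ 2 + ‖v‖ ^ 2 := by
    nlinarith [sq_nonneg (‖u‖ - ‖v‖)]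
  have hc : (s ^ m - (s - 1) ^ m) * Real.sqrt s ≤ m * s ^ m := by
    have := mul_le_mul_of_nonneg_left hsq hnn
    linarith
  have hc0 : 0 ≤ (s ^ m - (s - 1) ^ m) * Real.sqrt s := mul_nonneg hnn (Real.sqrt_nonneg s)
  have hb : b * ((starRingEnd ℂ) v * u).re ≤ |b| * |((starRingEnd ℂ) v * u).re| := by
    rw [← abs_mul]; exact le_abs_self _
  calc 2 * b * ((s ^ m - (s - 1) ^ m) * (Real.sqrt s * ((starRingEnd ℂ) v * u).re))
      = 2 * (((s ^ m - (s - 1) ^ m) * Real.sqrt s) * (b * ((starRingEnd ℂ) v * u).re)) := by ring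
    _ ≤ 2 * (((s ^ m - (s - 1) ^ m) * Real.sqrt s) * (|b| * |((starRingEnd ℂ) v * u).re|)) := by
        have := mul_le_mul_of_nonneg_left hb hc0
        linarith
    _ = ((s ^ m - (s - 1) ^ m) * Real.sqrt s) * (|b| * (2 * |((starRingEnd ℂ) v * u).re|)) := by
        ring
    _ ≤ (m * s ^ m) * (|b| * (‖u‖ ^ 2 + ‖v‖ ^ 2)) := by
        refine mul_le_mul hc (mul_le_mul_of_nonneg_left hre2 (abs_nonneg b)) (by positivity)
          (hc0.trans hc)
    _ = |b| * m * s ^ m * (‖u‖ ^ 2 + ‖v‖ ^ 2) := by ring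

lemma cross_bound (m n : ℕ) (hm : m ≠ 0) (b : ℝ) (x : ℕ → ℂ) (hx : ∀ j, n < j → x j = 0) :
    2 * ∑ j ∈ Finset.range (n + 1), (j : ℝ) ^ m *
        (b * (((starRingEnd ℂ) (x j) * cre x j).re - ((starRingEnd ℂ) (x j) * ann x j).re))
      ≤ ∑ j ∈ Finset.range (n + 1), |b| * m * (((j : ℝ) + 1) ^ m + (j : ℝ) ^ m) * ‖x j‖ ^ 2 := by
  have h1 : ∑ j ∈ Finset.range (n + 1), (j : ℝ) ^ m * ((starRingEnd ℂ) (x j) * cre x j).re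
      = ∑ j ∈ Finset.range (n + 1), ((j : ℝ) + 1) ^ m *
        (Real.sqrt ((j : ℝ) + 1) * ((starRingEnd ℂ) (x (j + 1)) * x j).re) := by
    rw [← sum_shift n (fun j => (j : ℝ) ^ m * ((starRingEnd ℂ) (x j) * cre x j).re)
      (by simp [cre]) (by simp [hx (n + 1) (Nat.lt_succ_self n)])]
    refine Finset.sum_congr rfl fun j _ => ?_
    simp only [cre, Nat.succ_ne_zero, if_false, Nat.add_sub_cancel, Complex.mul_re, Complex.mul_im,
      Complex.conj_re, Complex.conj_im, Complex.ofReal_re, Complex.ofReal_im, Nat.cast_add,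
      Nat.cast_one]
    ring
  have h2 : ∑ j ∈ Finset.range (n + 1), (j : ℝ) ^ m * ((starRingEnd ℂ) (x j) * ann x j).re
      = ∑ j ∈ Finset.range (n + 1), (j : ℝ) ^ m *
        (Real.sqrt ((j : ℝ) + 1) * ((starRingEnd ℂ) (x (j + 1)) * x j).re) := by
    refine Finset.sum_congr rfl fun j _ => ?_
    congr 1
    simp only [ann, Complex.mul_re, Complex.mul_im, Complex.conj_re, Complex.conj_im,
      Complex.ofReal_re, Complex.ofReal_im]
    ring
  have h3 : 2 * ∑ j ∈ Finset.range (n + 1), (j : ℝ) ^ m *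
        (b * (((starRingEnd ℂ) (x j) * cre x j).re - ((starRingEnd ℂ) (x j) * ann x j).re))
      = ∑ j ∈ Finset.range (n + 1), 2 * b * ((((j : ℝ) + 1) ^ m - ((j : ℝ) + 1 - 1) ^ m) *
        (Real.sqrt ((j : ℝ) + 1) * ((starRingEnd ℂ) (x (j + 1)) * x j).re)) := by
    calc _ = 2 * b * (∑ j ∈ Finset.range (n + 1), (j : ℝ) ^ m * ((starRingEnd ℂ) (x j) * cre x j).re
          - ∑ j ∈ Finset.range (n + 1), (j : ℝ) ^ m * ((starRingEnd ℂ) (x j) * ann x j).re) := by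
          rw [← Finset.sum_sub_distrib, Finset.mul_sum, Finset.mul_sum]
          exact Finset.sum_congr rfl fun j _ => by ring
      _ = _ := by
          rw [h1, h2, ← Finset.sum_sub_distrib, Finset.mul_sum]
          exact Finset.sum_congr rfl fun j _ => by rw [add_sub_cancel_right]; ring
  rw [h3]
  refine le_trans (Finset.sum_le_sum fun j _ =>
    cross_point m b ((j : ℝ) + 1) (by linarith [Nat.cast_nonneg (α := ℝ) j]) (x j) (x (j + 1))) ?_
  have h4 := sum_shift n (fun j => |b| * m * (j : ℝ) ^ m * ‖x j‖ ^ 2) (by simp [hm])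
    (by simp [hx (n + 1) (Nat.lt_succ_self n)])
  have e1 : ∀ j : ℕ, |b| * m * ((j : ℝ) + 1) ^ m * (‖x j‖ ^ 2 + ‖x (j + 1)‖ ^ 2)
      = |b| * m * ((j : ℝ) + 1) ^ m * ‖x j‖ ^ 2
        + |b| * m * ((j + 1 : ℕ) : ℝ) ^ m * ‖x (j + 1)‖ ^ 2 := by
    intro j; push_cast; ring
  have e2 : ∀ j : ℕ, |b| * m * (((j : ℝ) + 1) ^ m + (j : ℝ) ^ m) * ‖x j‖ ^ 2
      = |b| * m * ((j : ℝ) + 1) ^ m * ‖x j‖ ^ 2 + |b| * m * (j : ℝ) ^ m * ‖x j‖ ^ 2 := by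
    intro j; ring
  simp only [e1, e2, Finset.sum_add_distrib]
  rw [h4]

/-- the coefficientwise estimate -/
lemma coeff_bound (m k : ℕ) (b c1 c2 c3 c4 c5 c6 : ℝ) (hb : 0 ≤ b) (h2 : 0 ≤ c2)
    (h5 : 0 ≤ c5) (h45 : c5 ≤ c4) :
    b * m * (((k : ℝ) + 1) ^ m + (k : ℝ) ^ m)
      - (k : ℝ) ^ m * (c1 * k + c2 * (k + 1) + c3 * k ^ 2
          + c4 * (k * (k - 1)) + c5 * ((k + 1) * (k + 2)) + c6 * k ^ 4)
      + (c1 * ((k : ℝ) ^ m * k) + c2 * (((k : ℝ) + 1) ^ m * (k + 1)) + c3 * ((k : ℝ) ^ m * k ^ 2)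
        + c4 * (((k : ℝ) - 2) ^ m * (k * (k - 1)))
        + c5 * (((k : ℝ) + 2) ^ m * ((k + 1) * (k + 2))) + c6 * ((k : ℝ) ^ m * k ^ 4))
      ≤ ((2 * b * m + c2 * m + c5 * (4 * m ^ 2 + 8 * m)) * 3 ^ m) * ((k : ℝ) ^ m + 1) := by
  have hk : (0 : ℝ) ≤ k := Nat.cast_nonneg k
  have hm : (0 : ℝ) ≤ m := Nat.cast_nonneg m
  have hT := two_photon k m
  have hP := pow_shift_bound k m
  have hA : ((k : ℝ) + 1) ^ m ≤ ((k : ℝ) + 2) ^ m := pow_le_pow_left₀ (by linarith) (by linarith) m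
  have hB : (k : ℝ) ^ m ≤ ((k : ℝ) + 2) ^ m := pow_le_pow_left₀ (by linarith) (by linarith) m
  have hd := diff_bound ((k : ℝ) + 1) k 1 (by rw [abs_of_nonneg hk]; linarith) (by ring) m
  have hneg : (k : ℝ) * (k - 1) * (((k : ℝ) - 2) ^ m - (k : ℝ) ^ m) ≤ 0 := by
    rcases Nat.lt_or_ge k 2 with h | h
    · interval_cases k <;> simp
    · have h' : (2 : ℝ) ≤ k := by exact_mod_cast h
      have : ((k : ℝ) - 2) ^ m ≤ (k : ℝ) ^ m := pow_le_pow_left₀ (by linarith) (by linarith) m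
      exact mul_nonpos_of_nonneg_of_nonpos (mul_nonneg hk (by linarith)) (by linarith)
  have i1 : b * m * (((k : ℝ) + 1) ^ m + (k : ℝ) ^ m) ≤ b * m * (2 * ((k : ℝ) + 2) ^ m) :=
    mul_le_mul_of_nonneg_left (by linarith) (mul_nonneg hb hm)
  have i2 : c2 * (((k : ℝ) + 1) * (((k : ℝ) + 1) ^ m - (k : ℝ) ^ m))
      ≤ c2 * (m * ((k : ℝ) + 2) ^ m) := by
    refine mul_le_mul_of_nonneg_left ?_ h2
    have := mul_le_mul_of_nonneg_left hA hm
    linarith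
  have i3 := mul_le_mul_of_nonneg_left hT h5
  have i4 := mul_le_mul_of_nonpos_right h45 hneg
  have i5 := mul_le_mul_of_nonneg_left hP
    (by positivity : 0 ≤ 2 * b * m + c2 * m + c5 * (4 * (m : ℝ) ^ 2 + 8 * m))
  nlinarith only [i1, i2, i3, i4, i5]

/-- condition (H1.3) for `C = N^p` in the proof of Theorem 7. For
`p ≥ 4` and `|α₄| ≥ |α₅|` there are constants `α, β ≥ 0` with
`2 Re⟨N^p x, N^p Pₙ G x⟩ + Σ_{k=1}^{6} ‖N^p Pₙ L_k x‖² ≤ α(‖N^p x‖² + ‖x‖²) + β`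
for all `n` and all `x ∈ h_n`. -/
theorem stmt10 (p : ℕ) (hp : 4 ≤ p) (b1 b2 b3 : ℝ) (a1 a2 a3 a4 a5 a6 : ℂ)
    (ha : ‖a5‖ ≤ ‖a4‖) :
    ∃ al be : ℝ, 0 ≤ al ∧ 0 ≤ be ∧
      ∀ (n : ℕ) (x : ℕ → ℂ), (∀ j, n < j → x j = 0) →
        2 * (innerSeq (numPow p x) (numPow p (proj n (Gop b1 b2 b3 a1 a2 a3 a4 a5 a6 x)))).re
          + (normSq (numPow p (proj n (a1 • ann x)))
            + normSq (numPow p (proj n (a2 • cre x)))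
            + normSq (numPow p (proj n (a3 • num x)))
            + normSq (numPow p (proj n (a4 • ann (ann x))))
            + normSq (numPow p (proj n (a5 • cre (cre x))))
            + normSq (numPow p (proj n (a6 • num (num x)))))
          ≤ al * (normSq (numPow p x) + normSq x) + be := by
  obtain ⟨m, hm⟩ : ∃ m, m = 2 * p := ⟨_, rfl⟩
  refine ⟨(2 * |b1| * m + ‖a2‖ ^ 2 * m + ‖a5‖ ^ 2 * (4 * m ^ 2 + 8 * m)) * 3 ^ m, 0,
    by positivity, le_rfl, fun n x hx => ?_⟩
  have nx : normSq (numPow p x) = ∑ j ∈ Finset.range (n + 1), (j : ℝ) ^ m * ‖x j‖ ^ 2 := by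
    have := normSq_proj p n x
    rwa [proj_self n x hx, ← hm] at this
  have nx0 : normSq x = ∑ j ∈ Finset.range (n + 1), ‖x j‖ ^ 2 := by
    have := normSq_proj 0 n x
    have e0 : numPow 0 x = x := by funext j; simp [numPow]
    rw [proj_self n x hx, e0] at this
    simpa using this
  have sm : ∀ (a : ℂ) (f : ℕ → ℂ), normSq (numPow p (proj n (a • f)))
      = ‖a‖ ^ 2 * ∑ j ∈ Finset.range (n + 1), (j : ℝ) ^ m * ‖f j‖ ^ 2 := by
    intro a f
    rw [normSq_proj, ← hm, Finset.mul_sum]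
    refine Finset.sum_congr rfl fun j _ => ?_
    rw [Pi.smul_apply, smul_eq_mul, norm_mul, mul_pow]
    ring
  have l1 := mul_le_mul_of_nonneg_left (L1_bound m n x hx) (sq_nonneg ‖a1‖)
  have l2 := mul_le_mul_of_nonneg_left (L2_bound m n x) (sq_nonneg ‖a2‖)
  have l5 := mul_le_mul_of_nonneg_left (L5_bound m n x) (sq_nonneg ‖a5‖)
  have l4 := L4_eq m n x hx
  have l3 : ∑ j ∈ Finset.range (n + 1), (j : ℝ) ^ m * ‖num x j‖ ^ 2
      = ∑ j ∈ Finset.range (n + 1), (j : ℝ) ^ m * j ^ 2 * ‖x j‖ ^ 2 :=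
    Finset.sum_congr rfl fun j _ => by simp only [num, norm_mul, Complex.norm_natCast]; ring
  have l6 : ∑ j ∈ Finset.range (n + 1), (j : ℝ) ^ m * ‖num (num x) j‖ ^ 2
      = ∑ j ∈ Finset.range (n + 1), (j : ℝ) ^ m * j ^ 4 * ‖x j‖ ^ 2 :=
    Finset.sum_congr rfl fun j _ => by simp only [num, norm_mul, Complex.norm_natCast]; ring
  have cb := cross_bound m n (by omega) b1 x hx
  rw [inner_proj, ← hm, nx, nx0, sm, sm, sm, sm, sm, sm, l3, l4, l6]
  simp only [G_point]
  have eG : 2 * ∑ j ∈ Finset.range (n + 1), (j : ℝ) ^ m *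
      (b1 * (((starRingEnd ℂ) (x j) * cre x j).re - ((starRingEnd ℂ) (x j) * ann x j).re)
        - 1 / 2 * (‖a1‖ ^ 2 * j + ‖a2‖ ^ 2 * (j + 1) + ‖a3‖ ^ 2 * j ^ 2
          + ‖a4‖ ^ 2 * (j * (j - 1)) + ‖a5‖ ^ 2 * ((j + 1) * (j + 2)) + ‖a6‖ ^ 2 * j ^ 4)
          * ‖x j‖ ^ 2)
      = 2 * ∑ j ∈ Finset.range (n + 1), (j : ℝ) ^ m *
        (b1 * (((starRingEnd ℂ) (x j) * cre x j).re - ((starRingEnd ℂ) (x j) * ann x j).re))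
      - ∑ j ∈ Finset.range (n + 1), (j : ℝ) ^ m *
        (‖a1‖ ^ 2 * j + ‖a2‖ ^ 2 * (j + 1) + ‖a3‖ ^ 2 * j ^ 2
          + ‖a4‖ ^ 2 * (j * (j - 1)) + ‖a5‖ ^ 2 * ((j + 1) * (j + 2)) + ‖a6‖ ^ 2 * j ^ 4)
          * ‖x j‖ ^ 2 := by
    rw [Finset.mul_sum, Finset.mul_sum, ← Finset.sum_sub_distrib]
    exact Finset.sum_congr rfl fun j _ => by ring
  rw [eG]
  have fin2 : ∑ j ∈ Finset.range (n + 1), |b1| * m * (((j : ℝ) + 1) ^ m + (j : ℝ) ^ m) * ‖x j‖ ^ 2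
      - ∑ j ∈ Finset.range (n + 1), (j : ℝ) ^ m *
        (‖a1‖ ^ 2 * j + ‖a2‖ ^ 2 * (j + 1) + ‖a3‖ ^ 2 * j ^ 2
          + ‖a4‖ ^ 2 * (j * (j - 1)) + ‖a5‖ ^ 2 * ((j + 1) * (j + 2)) + ‖a6‖ ^ 2 * j ^ 4)
          * ‖x j‖ ^ 2
      + (‖a1‖ ^ 2 * ∑ j ∈ Finset.range (n + 1), (j : ℝ) ^ m * j * ‖x j‖ ^ 2
        + ‖a2‖ ^ 2 * ∑ j ∈ Finset.range (n + 1), ((j : ℝ) + 1) ^ m * (j + 1) * ‖x j‖ ^ 2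
        + ‖a3‖ ^ 2 * ∑ j ∈ Finset.range (n + 1), (j : ℝ) ^ m * j ^ 2 * ‖x j‖ ^ 2
        + ‖a4‖ ^ 2 * ∑ j ∈ Finset.range (n + 1), ((j : ℝ) - 2) ^ m * (j * (j - 1)) * ‖x j‖ ^ 2
        + ‖a5‖ ^ 2 * ∑ j ∈ Finset.range (n + 1),
            ((j : ℝ) + 2) ^ m * ((j + 1) * (j + 2)) * ‖x j‖ ^ 2
        + ‖a6‖ ^ 2 * ∑ j ∈ Finset.range (n + 1), (j : ℝ) ^ m * j ^ 4 * ‖x j‖ ^ 2)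
      ≤ ((2 * |b1| * m + ‖a2‖ ^ 2 * m + ‖a5‖ ^ 2 * (4 * m ^ 2 + 8 * m)) * 3 ^ m) *
        (∑ j ∈ Finset.range (n + 1), (j : ℝ) ^ m * ‖x j‖ ^ 2
          + ∑ j ∈ Finset.range (n + 1), ‖x j‖ ^ 2) := by
    simp only [Finset.mul_sum, ← Finset.sum_add_distrib, ← Finset.sum_sub_distrib]
    refine Finset.sum_le_sum fun k _ => ?_
    have := mul_le_mul_of_nonneg_right (coeff_bound m k |b1| (‖a1‖ ^ 2) (‖a2‖ ^ 2) (‖a3‖ ^ 2)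
      (‖a4‖ ^ 2) (‖a5‖ ^ 2) (‖a6‖ ^ 2) (abs_nonneg b1) (sq_nonneg _) (sq_nonneg _)
      (pow_le_pow_left₀ (norm_nonneg _) ha 2)) (sq_nonneg ‖x k‖)
    linarith only [this]
  linarith only [fin2, cb, l1, l2, l5]

end QOsc
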